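/- Let A be a ring and let R = A((x)) be its Laurent series ring. If every cyclic right R-module is quotient finite-dimensional, then the Jacobson radical J(R) of R is nilpotent. -/

import Mathlib

universe u

/-- A module is *finite-dimensional* (in the sense of Goldie/uniform dimension) if it
does not contain an infinite direct sum of nonzero submodules, i.e. every independent
family of nonzero submodules is finite. -/
def IsFinDimModule (R M : Type*) [Ring R] [AddCommGroup M] [Module R M] : Prop :=
  ∀ (ι : Type) (N : ι → Submodule R M), iSupIndep N → (∀ i, N i ≠ ⊥) → Finite ι

/-- A module is *quotient finite-dimensional* if every quotient module of it is
finite-dimensional. -/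
def IsQFDModule (R M : Type*) [Ring R] [AddCommGroup M] [Module R M] : Prop :=
  ∀ N : Submodule R M, IsFinDimModule R (M ⧸ N)

/-! Right `A`-modules are `Aᵐᵒᵖ`-modules. If `A((x))` is quotient finite-dimensional over itself,
then `A` is right Noetherian: a strictly increasing chain of right ideals gives sparse series `f k`,
with coefficients outside successive terms of the chain, and right submodules `L k` of `A((x))` such
that `f j ∈ L k` exactly when `j ≠ k`; modulo `⨅ k, L k` the `f k` generate an infinite direct sum.

A right Noetherian ring `A` has a nilpotent ideal `N` with `A ⧸ N` semiprime, and the coefficients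
of the elements of `J(A((x)))` lie in `N` as soon as `J((A ⧸ N)((x))) = 0`. So let `A` be semiprime.
The leading coefficients of the elements of `J(A((x)))` form an ideal, which is nil: inverting
`1 - x⁻¹ b φ`, where `φ ∈ J(A((x)))` is a power series with constant term `b`, shows that
`b ∈ b² A` whenever left multiplication by `b` has disjoint kernel and image, which forces `b = 0`;
some power of every element of a right Noetherian ring has disjoint kernel and image. A nil ideal
of a semiprime right Noetherian ring is zero by Levitzki's theorem. -/

section QuotientFiniteDimensional

theorem IsQFDModule.exists_mem_of_forall_ne {R M : Type*} [Ring R] [AddCommGroup M] [Module R M]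
    (hM : IsQFDModule R M) (L : ℕ → Submodule R M) (f : ℕ → M)
    (hf : ∀ j k, j ≠ k → f j ∈ L k) : ∃ k, f k ∈ L k := by
  by_contra! hfL
  let D : Submodule R M := ⨅ k, L k
  let N (k : ℕ) : Submodule R (M ⧸ D) := R ∙ D.mkQ (f k)
  have mem_of_mkQ_mem {k : ℕ} {m : M} (hm : D.mkQ m ∈ (L k).map D.mkQ) : m ∈ L k := by
    have hD : LinearMap.ker D.mkQ ≤ L k := D.ker_mkQ.trans_le (iInf_le L k)
    rwa [← Submodule.mem_comap, Submodule.comap_map_eq_self hD] at hm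
  have N_le {j k : ℕ} (hjk : j ≠ k) : N j ≤ (L k).map D.mkQ :=
    (Submodule.span_singleton_le_iff_mem ..).2 (Submodule.mem_map_of_mem (hf j k hjk))
  have N_ne_bot (k : ℕ) : N k ≠ ⊥ := fun hk ↦
    hfL k (mem_of_mkQ_mem (Submodule.span_singleton_eq_bot.1 hk ▸ zero_mem _))
  have N_indep : iSupIndep N := by
    refine fun k ↦ Disjoint.mono_right (iSup₂_le fun j hj ↦ N_le hj) ?_
    rw [Submodule.disjoint_def]
    intro x hx hxL
    obtain ⟨r, rfl⟩ := Submodule.mem_span_singleton.1 hx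
    rw [← map_smul] at hxL ⊢
    refine (Submodule.Quotient.mk_eq_zero D).2 ((Submodule.mem_iInf L).2 fun j ↦ ?_)
    obtain rfl | hkj := eq_or_ne k j
    · exact mem_of_mkQ_mem hxL
    · exact (L j).smul_mem r (hf k j hkj)
  have := hM D ℕ N N_indep N_ne_bot
  exact not_finite ℕ

end QuotientFiniteDimensional

section Noetherian

theorem coeff_mul_mem {Γ A : Type*} [AddCommMonoid Γ] [PartialOrder Γ] [IsOrderedCancelAddMonoid Γ]
    [NonUnitalNonAssocSemiring A] (P : AddSubmonoid A) {f g : HahnSeries Γ A} {d : Γ}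
    (h : ∀ i j, i + j = d → g.coeff j ≠ 0 → f.coeff i * g.coeff j ∈ P) :
    (f * g).coeff d ∈ P := by
  rw [HahnSeries.coeff_mul]
  refine sum_mem fun ij hij ↦ ?_
  obtain ⟨-, hj, hd⟩ := Finset.mem_antidiagonal.1 hij
  exact h _ _ hd hj

variable {A : Type*} [Ring A]

/-- The right submodule of the Laurent series whose coefficients of degree less than `b n - D` lie
in the right ideal `F n` for every `n`, where the shift `D` depends on the series but not on `n`. -/
def eventualCoeffSubmodule {ι : Type*} (F : ι → Submodule Aᵐᵒᵖ A) (b : ι → ℤ) :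
    Submodule (LaurentSeries A)ᵐᵒᵖ (LaurentSeries A) where
  carrier := {g | ∃ D : ℤ, ∀ n d, d + D < b n → g.coeff d ∈ F n}
  zero_mem' := ⟨0, fun n _ _ ↦ zero_mem (F n)⟩
  add_mem' := by
    rintro g g' ⟨D, hD⟩ ⟨D', hD'⟩
    exact ⟨max D D', fun n d hd ↦
      add_mem (hD n d (by omega)) (hD' n d (by omega))⟩
  smul_mem' := by
    rintro r g ⟨D, hD⟩
    refine ⟨D - r.unop.order, fun n d hd ↦
      coeff_mul_mem (F n).toAddSubmonoid fun i j hij hj ↦ ?_⟩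
    have hrj : r.unop.order ≤ j := HahnSeries.order_le_of_coeff_ne_zero hj
    exact (F n).smul_mem (MulOpposite.op (r.unop.coeff j)) (hD n i (by omega))

/-- The series `∑ n, c n * x ^ e n`, for injective `e`. -/
noncomputable def sparseSeries (e : ℕ → ℕ) (c : ℕ → A) : LaurentSeries A :=
  HahnSeries.ofPowerSeries ℤ A (PowerSeries.mk (Function.extend e c 0))

theorem coeff_sparseSeries {e : ℕ → ℕ} (he : e.Injective) (c : ℕ → A) (n : ℕ) :
    (sparseSeries e c).coeff (e n) = c n := by
  rw [sparseSeries, LaurentSeries.coeff_coe_powerSeries, PowerSeries.coeff_mk, he.extend_apply]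

theorem coeff_sparseSeries_mem {e : ℕ → ℕ} (he : e.Injective) {c : ℕ → A} (P : AddSubmonoid A)
    {d : ℤ} (h : ∀ n, d = e n → c n ∈ P) : (sparseSeries e c).coeff d ∈ P := by
  by_cases hd : ∃ n, d = e n
  · obtain ⟨n, rfl⟩ := hd
    rw [coeff_sparseSeries he]
    exact h n rfl
  · have hd0 : (sparseSeries e c).coeff d = 0 := by
      rw [sparseSeries, PowerSeries.coeff_coe]
      split_ifs with h0
      · rfl
      · rw [PowerSeries.coeff_mk, Function.extend_apply' _ _ _ fun ⟨n, hn⟩ ↦ hd ⟨n, by omega⟩]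
        rfl
    exact hd0 ▸ P.zero_mem

theorem IsQFDModule.not_strictMono (h : IsQFDModule (LaurentSeries A)ᵐᵒᵖ (LaurentSeries A))
    (F : ℕ → Submodule Aᵐᵒᵖ A) : ¬ StrictMono F := by
  intro hF
  -- The `i`-th term of `f j` has degree `2 ^ Nat.pair j i`, which is below `2 * 2 ^ Nat.pair k n`
  -- only if `Nat.pair j i ≤ Nat.pair k n`; if `j ≠ k`, its coefficient is then in
  -- `F (Nat.pair k n)`.
  choose m hm hm' using fun n ↦ SetLike.exists_of_lt (hF (Nat.lt_succ_self n))
  let e (k n : ℕ) : ℕ := 2 ^ Nat.pair k n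
  let f (k : ℕ) : LaurentSeries A := sparseSeries (e k) fun n ↦ m (Nat.pair k n)
  let L (k : ℕ) := eventualCoeffSubmodule (fun n ↦ F (Nat.pair k n)) fun n ↦ 2 * e k n
  have e_inj (k : ℕ) : (e k).Injective := fun n n' hn ↦
    (Nat.pair_eq_pair.1 (Nat.pow_right_injective le_rfl hn)).2
  have f_mem_L (j k : ℕ) (hjk : j ≠ k) : f j ∈ L k := by
    refine ⟨0, fun n d hd ↦ coeff_sparseSeries_mem (e_inj j) (F _).toAddSubmonoid ?_⟩
    rintro i rfl
    have hlt : 2 ^ Nat.pair j i < 2 ^ (Nat.pair k n + 1) := by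
      rw [pow_succ']; simp only [e] at hd; omega
    have hle : Nat.pair j i ≤ Nat.pair k n :=
      Nat.lt_succ_iff.1 ((Nat.pow_lt_pow_iff_right one_lt_two).1 hlt)
    have hne : Nat.pair j i ≠ Nat.pair k n := fun heq ↦ hjk (Nat.pair_eq_pair.1 heq).1
    exact hF.monotone (hle.lt_of_ne hne) (hm _)
  obtain ⟨k, D, hD⟩ := h.exists_mem_of_forall_ne L f f_mem_L
  have hn : D.toNat < e k D.toNat := (Nat.right_le_pair k _).trans_lt Nat.lt_two_pow_self
  have hmem : (f k).coeff (e k D.toNat) ∈ F (Nat.pair k D.toNat) :=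
    hD D.toNat _ (show (_ : ℤ) < 2 * e k D.toNat by omega)
  rw [coeff_sparseSeries (e_inj k)] at hmem
  exact hm' _ hmem

theorem IsQFDModule.isNoetherian_coeff
    (h : IsQFDModule (LaurentSeries A)ᵐᵒᵖ (LaurentSeries A)) : IsNoetherian Aᵐᵒᵖ A := by
  rw [isNoetherian_iff, RelEmbedding.wellFounded_iff_isEmpty]
  exact ⟨fun F ↦ h.not_strictMono F fun _ _ hmn ↦ F.map_rel_iff.2 hmn⟩

end Noetherian

section Semiprime

variable {A : Type*} [Ring A]

/-- A ring `A` is *semiprime* if `a A a = 0` implies `a = 0`; equivalently, it has no nonzero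
nilpotent ideal. -/
def IsSemiprimeRing (A : Type*) [Ring A] : Prop :=
  ∀ a : A, (∀ u, a * u * a = 0) → a = 0

-- Utumi's argument for Levitzki's theorem: a nonzero element `a` of a nil left ideal whose right
-- annihilator is maximal satisfies `a A a = 0`.
theorem IsSemiprimeRing.eq_bot_of_forall_isNilpotent [IsNoetherian Aᵐᵒᵖ A]
    (hA : IsSemiprimeRing A) {I : Ideal A} (hI : ∀ a ∈ I, IsNilpotent a) : I = ⊥ := by
  by_contra hI_ne
  let rightAnn (a : A) : Submodule Aᵐᵒᵖ A := LinearMap.ker (LinearMap.mulLeft Aᵐᵒᵖ a)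
  have mem_rightAnn {a x : A} : x ∈ rightAnn a ↔ a * x = 0 := Iff.rfl
  obtain ⟨b, hbI, hb⟩ := Submodule.exists_mem_ne_zero_of_ne_bot hI_ne
  obtain ⟨_, ⟨a, ⟨haI, ha⟩, rfl⟩, hmax⟩ := set_has_maximal_iff_noetherian.2 ‹_›
    (rightAnn '' {a | a ∈ I ∧ a ≠ 0}) ⟨_, b, ⟨hbI, hb⟩, rfl⟩
  refine ha (hA a fun u ↦ ?_)
  rw [mul_assoc]
  have huaI : u * a ∈ I := I.mul_mem_left u haI
  obtain hua | hua := eq_or_ne (u * a) 0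
  · rw [hua, mul_zero]
  obtain ⟨k, hk0, hk1⟩ : ∃ k, (u * a) ^ (k + 1) ≠ 0 ∧ (u * a) ^ (k + 2) = 0 := by
    have : Nontrivial A := ⟨_, _, hua⟩
    have hpos := pos_nilpotencyClass_iff.2 (hI _ huaI)
    have hne_one := nilpotencyClass_eq_one.not.2 hua
    refine ⟨nilpotencyClass (u * a) - 2, (nilpotencyClass_eq_succ_iff.1 ?_).symm⟩
    omega
  have hle : rightAnn a ≤ rightAnn ((u * a) ^ (k + 1)) := fun x hx ↦ by
    rw [mem_rightAnn] at hx ⊢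
    rw [pow_succ, mul_assoc, mul_assoc u, hx, mul_zero, mul_zero]
  have heq : rightAnn a = rightAnn ((u * a) ^ (k + 1)) := by
    refine hle.eq_of_not_lt (hmax _ ⟨_, ⟨?_, hk0⟩, rfl⟩)
    exact pow_succ (u * a) k ▸ I.mul_mem_left _ huaI
  rw [← mem_rightAnn, heq, mem_rightAnn, ← pow_succ, hk1]

theorem isNilpotent_of_mul_self_le {I N : Ideal A} (hIN : I * I ≤ N) (hN : IsNilpotent N) :
    IsNilpotent I := by
  obtain ⟨n, hn⟩ := hN
  have pow_le (m : ℕ) : I ^ (2 * m) ≤ N ^ m := by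
    induction m with
    | zero => exact le_rfl
    | succ m ih => calc
      I ^ (2 * (m + 1)) = I ^ (2 * m) * (I * I) := by
        rw [mul_add, mul_one, Submodule.pow_add I two_ne_zero, Submodule.pow_succ,
          Submodule.pow_one]
      _ ≤ N ^ m * N := Ideal.mul_mono ih hIN
      _ = N ^ (m + 1) := (Submodule.pow_succ N).symm
  exact ⟨2 * n, le_bot_iff.1 ((pow_le n).trans_eq hn)⟩

theorem wellFoundedGT_twoSidedIdeal [IsNoetherian Aᵐᵒᵖ A] : WellFoundedGT (TwoSidedIdeal A) :=
  let toRightIdeal (I : TwoSidedIdeal A) : Submodule Aᵐᵒᵖ A :=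
    { carrier := I
      zero_mem' := I.zero_mem
      add_mem' := I.add_mem
      smul_mem' := fun r _ hx ↦ I.mul_mem_right _ r.unop hx }
  StrictMono.wellFoundedGT (f := toRightIdeal) fun _ _ h ↦ h

theorem mul_top_mul_self_le {I N : Ideal A} [N.IsTwoSided] (h : I * I ≤ N) :
    (I * ⊤) * (I * ⊤) ≤ N :=
  calc
    (I * ⊤) * (I * ⊤) = I * (⊤ * I) * ⊤ := by simp only [Ideal.mul_assoc]
    _ ≤ I * I * ⊤ := Ideal.mul_mono (Ideal.mul_mono le_rfl Ideal.mul_le_right) le_rfl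
    _ ≤ N * ⊤ := Ideal.mul_mono h le_rfl
    _ ≤ N := Ideal.mul_le_left

theorem sup_mul_self_le {I N : Ideal A} [N.IsTwoSided] (h : I * I ≤ N) :
    (N ⊔ I) * (N ⊔ I) ≤ N := by
  rw [Ideal.sup_mul, Ideal.mul_sup, Ideal.mul_sup]
  exact sup_le (sup_le Ideal.mul_le_left Ideal.mul_le_left) (sup_le Ideal.mul_le_right h)

theorem exists_isNilpotent_isSemiprimeRing_quotient [IsNoetherian Aᵐᵒᵖ A] :
    ∃ (N : Ideal A) (_ : N.IsTwoSided), IsNilpotent N ∧ IsSemiprimeRing (A ⧸ N) := by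
  have := wellFoundedGT_twoSidedIdeal (A := A)
  obtain ⟨N, hN, hmax⟩ := wellFounded_gt.has_min {N : TwoSidedIdeal A | IsNilpotent N.asIdeal}
    ⟨⊥, 1, Submodule.pow_one _⟩
  have le_of_mul_self_le (I : TwoSidedIdeal A) (hI : I.asIdeal * I.asIdeal ≤ N.asIdeal) :
      I ≤ N := by
    have hsup : (N ⊔ I).asIdeal ≤ N.asIdeal ⊔ I.asIdeal := fun x hx ↦ by
      rw [Submodule.mem_sup]
      exact TwoSidedIdeal.mem_sup.1 hx
    have hnil : IsNilpotent (N ⊔ I).asIdeal :=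
      isNilpotent_of_mul_self_le ((Ideal.mul_mono hsup hsup).trans (sup_mul_self_le hI)) hN
    exact left_eq_sup.1 (le_sup_left.eq_of_not_lt (hmax _ hnil))
  refine ⟨N.asIdeal, inferInstance, hN, fun x hx ↦ ?_⟩
  obtain ⟨a, rfl⟩ := Ideal.Quotient.mk_surjective x
  have ha (u : A) : a * u * a ∈ N.asIdeal := by
    simpa only [← map_mul, Ideal.Quotient.eq_zero_iff_mem] using hx (Ideal.Quotient.mk _ u)
  have hspan : Ideal.span {a} * Ideal.span {a} ≤ N.asIdeal := by
    refine Ideal.mul_le.2 fun p hp q hq ↦ ?_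
    obtain ⟨b, rfl⟩ := Ideal.mem_span_singleton'.1 hp
    obtain ⟨c, rfl⟩ := Ideal.mem_span_singleton'.1 hq
    simpa only [mul_assoc] using N.asIdeal.mul_mem_left b (ha c)
  refine Ideal.Quotient.eq_zero_iff_mem.2 (le_of_mul_self_le (Ideal.span {a} * ⊤).toTwoSided ?_ ?_)
  · simpa only [Ideal.asIdeal_toTwoSided] using mul_top_mul_self_le hspan
  · rw [Ideal.mem_toTwoSided]
    have ha_one := Ideal.mul_mem_mul (Ideal.mem_span_singleton_self a) (Submodule.mem_top (x := 1))
    rwa [mul_one] at ha_one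

theorem isNoetherian_mulOpposite_of_surjective {B : Type*} [Ring B] [IsNoetherian Aᵐᵒᵖ A]
    (f : A →+* B) (hf : Function.Surjective f) : IsNoetherian Bᵐᵒᵖ B :=
  have : RingHomSurjective f.op :=
    ⟨MulOpposite.op_surjective.comp (hf.comp MulOpposite.unop_surjective)⟩
  let g : A →ₛₗ[(f.op : Aᵐᵒᵖ →+* Bᵐᵒᵖ)] B :=
    { toFun := f
      map_add' := map_add f
      map_smul' := fun r a ↦ map_mul f a r.unop }
  isNoetherian_of_surjective g (LinearMap.range_eq_top.2 hf)

theorem isUnit_of_sub_one_mem_jacobson_bot {r : A}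
    (hr : r - 1 ∈ Ideal.jacobson (⊥ : Ideal A)) : IsUnit r := by
  obtain ⟨s, hs⟩ := Ideal.exists_mul_sub_mem_of_sub_one_mem_jacobson r hr
  have hsr : s * r = 1 := sub_eq_zero.1 hs
  have hs_sub : s - 1 ∈ Ideal.jacobson (⊥ : Ideal A) := by
    have h : s - 1 = -s * (r - 1) := by rw [mul_sub, neg_mul, hsr, mul_one]; abel
    exact h ▸ Ideal.mul_mem_left _ _ hr
  obtain ⟨t, ht⟩ := Ideal.exists_mul_sub_mem_of_sub_one_mem_jacobson s hs_sub
  have hts : t * s = 1 := sub_eq_zero.1 ht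
  have htr : t = r := left_inv_eq_right_inv hts hsr
  exact ⟨⟨r, s, htr ▸ hts, hsr⟩, rfl⟩

end Semiprime

section Jacobson

variable {A : Type*} [Ring A]

/-- The left ideal of constant terms of the power series lying in a left ideal `I` of the Laurent
series ring; these are the leading coefficients of the elements of `I`, and `0`. -/
noncomputable def leadingCoeffIdeal (I : Ideal (LaurentSeries A)) : Ideal A :=
  (I.comap (HahnSeries.ofPowerSeries ℤ A)).map PowerSeries.constantCoeff

theorem mem_leadingCoeffIdeal {I : Ideal (LaurentSeries A)} {a : A} :
    a ∈ leadingCoeffIdeal I ↔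
      ∃ φ : PowerSeries A, (φ : LaurentSeries A) ∈ I ∧ PowerSeries.constantCoeff φ = a :=
  Ideal.mem_map_iff_of_surjective _ PowerSeries.constantCoeff_surj

theorem eq_bot_of_leadingCoeffIdeal_eq_bot {I : Ideal (LaurentSeries A)}
    (hI : leadingCoeffIdeal I = ⊥) : I = ⊥ := by
  refine (Submodule.eq_bot_iff I).2 fun f hf ↦ HahnSeries.coeff_order_eq_zero.1 ?_
  rw [← Submodule.mem_bot A, ← hI, mem_leadingCoeffIdeal]
  refine ⟨f.powerSeriesPart, ?_, ?_⟩
  · rw [LaurentSeries.ofPowerSeries_powerSeriesPart]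
    exact I.mul_mem_left _ hf
  · rw [← PowerSeries.coeff_zero_eq_constantCoeff_apply, LaurentSeries.powerSeriesPart_coeff,
      Nat.cast_zero, add_zero]

theorem coeff_powerSeries_mul_of_forall_lt (φ : PowerSeries A) {f : LaurentSeries A} {k : ℤ}
    (hf : ∀ i < k, f.coeff i = 0) :
    (φ * f : LaurentSeries A).coeff k = PowerSeries.constantCoeff φ * f.coeff k := by
  rw [← PowerSeries.coeff_zero_eq_constantCoeff_apply, ← LaurentSeries.coeff_coe_powerSeries,
    HahnSeries.coeff_mul]
  refine Finset.sum_eq_single (((0 : ℕ) : ℤ), k) (fun ⟨i, j⟩ hij hne ↦ absurd ?_ hne) fun hk ↦ ?_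
  · obtain ⟨hi, hj, hijk⟩ := Finset.mem_antidiagonal.1 hij
    have hi0 : 0 ≤ i := not_lt.1 fun h ↦ hi (by rw [PowerSeries.coeff_coe, if_pos h])
    have hjk : k ≤ j := not_lt.1 fun h ↦ hj (hf j h)
    simp only at hijk
    ext <;> simp only <;> omega
  · by_contra hne
    exact hk (Finset.mem_antidiagonal.2
      ⟨left_ne_zero_of_mul hne, right_ne_zero_of_mul hne, by simp⟩)

-- The recursion `hh` says that `(1 - x⁻¹ b φ) h` is a constant.
theorem mul_coeff_zero_eq_zero_of_coeff_eq {b : A} (hb : ∀ y, b * (b * y) = 0 → b * y = 0)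
    {φ : PowerSeries A} (hφ : PowerSeries.constantCoeff φ = b) {h : LaurentSeries A}
    (hh : ∀ i ≠ 0, h.coeff i = b * (φ * h : LaurentSeries A).coeff (i + 1)) :
    b * h.coeff 0 = 0 := by
  have mul_coeff {k : ℤ} (hk : k ≤ 0) (hlow : ∀ i < k, h.coeff i = 0) : b * h.coeff k = 0 := by
    have hprev := hh (k - 1) (by omega)
    rw [hlow _ (by omega), sub_add_cancel, coeff_powerSeries_mul_of_forall_lt φ hlow, hφ] at hprev
    exact hb _ hprev.symm
  have hlow : ∀ i < h.order, h.coeff i = 0 := fun i ↦ HahnSeries.coeff_eq_zero_of_lt_order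
  obtain hneg | hnonneg := lt_or_ge h.order 0
  · have hlead := hh h.order hneg.ne
    have hlead0 : h.coeff h.order = 0 := hlead.trans (hb _ (hlead ▸ mul_coeff hneg.le hlow))
    rw [HahnSeries.coeff_order_eq_zero.1 hlead0, HahnSeries.coeff_zero, mul_zero]
  · exact mul_coeff le_rfl fun i hi ↦ hlow i (hi.trans_le hnonneg)

theorem exists_eq_mul_mul_of_mem_leadingCoeffIdeal_jacobson {b : A}
    (hbJ : b ∈ leadingCoeffIdeal (Ideal.jacobson (⊥ : Ideal (LaurentSeries A))))
    (hb : ∀ y, b * (b * y) = 0 → b * y = 0) : ∃ v, b = b * b * v := by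
  obtain ⟨φ, hφJ, hφ⟩ := mem_leadingCoeffIdeal.1 hbJ
  have hunit :
      IsUnit (1 - HahnSeries.single (-1) 1 * (HahnSeries.C b * (φ : LaurentSeries A))) := by
    refine isUnit_of_sub_one_mem_jacobson_bot ?_
    rw [sub_sub_cancel_left]
    exact neg_mem (Ideal.mul_mem_left _ _ (Ideal.mul_mem_left _ _ hφJ))
  obtain ⟨h, hh⟩ := hunit.exists_right_inv
  have hcoeff (i : ℤ) :
      h.coeff i = (1 : LaurentSeries A).coeff i + b * (φ * h : LaurentSeries A).coeff (i + 1) := by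
    rw [sub_mul, one_mul, sub_eq_iff_eq_add, mul_assoc, mul_assoc] at hh
    conv_lhs => rw [hh]
    rw [HahnSeries.coeff_add, HahnSeries.coeff_single_mul, one_mul, sub_neg_eq_add,
      HahnSeries.C_mul_eq_smul, HahnSeries.coeff_smul, smul_eq_mul]
  have hb0 : b * h.coeff 0 = 0 := mul_coeff_zero_eq_zero_of_coeff_eq hb hφ fun i hi ↦ by
    rw [hcoeff, HahnSeries.coeff_one, if_neg hi, zero_add]
  refine ⟨-(φ * h : LaurentSeries A).coeff (0 + 1), ?_⟩
  rw [hcoeff 0, HahnSeries.coeff_one, if_pos rfl, mul_add, mul_one, ← mul_assoc] at hb0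
  exact (eq_neg_of_add_eq_zero_left hb0).trans (mul_neg _ _).symm

theorem C_mem_of_mem_leadingCoeffIdeal {I : Ideal (LaurentSeries A)} [I.IsTwoSided] {b v : A}
    (hbI : b ∈ leadingCoeffIdeal I) (hb : b = b * b * v) : HahnSeries.C b ∈ I := by
  obtain ⟨φ, hφI, hφ⟩ := mem_leadingCoeffIdeal.1 hbI
  let ψ : PowerSeries A := 1 - PowerSeries.C (b * v) + φ * PowerSeries.C v
  have hψ : IsUnit (ψ : LaurentSeries A) := by
    have hψ0 : PowerSeries.constantCoeff ψ = 1 := by simp [ψ, hφ]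
    exact (PowerSeries.isUnit_iff_constantCoeff.2 (hψ0 ▸ isUnit_one)).map _
  have hmul : PowerSeries.C b * ψ = PowerSeries.C b * φ * PowerSeries.C v := by
    have hC : PowerSeries.C b * PowerSeries.C (b * v) = PowerSeries.C b := by
      rw [← map_mul, ← mul_assoc, ← hb]
    rw [mul_add, mul_sub, hC, mul_one, sub_self, zero_add, mul_assoc]
  have hmem : HahnSeries.C b * (ψ : LaurentSeries A) ∈ I := by
    rw [← PowerSeries.coe_C, ← PowerSeries.coe_mul, hmul, PowerSeries.coe_mul, PowerSeries.coe_mul]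
    exact I.mul_mem_right _ (I.mul_mem_left _ hφI)
  obtain ⟨ψ', hψ'⟩ := hψ.exists_right_inv
  simpa only [mul_assoc, hψ', mul_one] using I.mul_mem_right ψ' hmem

theorem eq_zero_of_mem_leadingCoeffIdeal_jacobson {b v : A}
    (hbJ : b ∈ leadingCoeffIdeal (Ideal.jacobson (⊥ : Ideal (LaurentSeries A))))
    (hb : b = b * b * v) : b = 0 := by
  have hunit : IsUnit (1 - HahnSeries.C b * HahnSeries.C v : LaurentSeries A) := by
    refine isUnit_of_sub_one_mem_jacobson_bot ?_
    rw [sub_sub_cancel_left]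
    exact neg_mem (Ideal.mul_mem_right _ _ (C_mem_of_mem_leadingCoeffIdeal hbJ hb))
  have hzero : HahnSeries.C b * (1 - HahnSeries.C b * HahnSeries.C v : LaurentSeries A) = 0 := by
    rw [mul_sub, mul_one, ← map_mul, ← map_mul, ← mul_assoc, ← hb, sub_self]
  exact HahnSeries.C_injective ((hunit.mul_left_eq_zero.1 hzero).trans (map_zero _).symm)

theorem isNilpotent_of_mem_leadingCoeffIdeal_jacobson [IsNoetherian Aᵐᵒᵖ A] {a : A}
    (ha : a ∈ leadingCoeffIdeal (Ideal.jacobson (⊥ : Ideal (LaurentSeries A)))) :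
    IsNilpotent a := by
  obtain ⟨n, hn, hdisj⟩ := ((Filter.eventually_gt_atTop 0).and
    (Module.End.eventually_disjoint_ker_pow_range_pow (LinearMap.mulLeft Aᵐᵒᵖ a))).exists
  rw [LinearMap.pow_mulLeft, Submodule.disjoint_def] at hdisj
  have hpow : a ^ n ∈ leadingCoeffIdeal (Ideal.jacobson (⊥ : Ideal (LaurentSeries A))) :=
    Ideal.pow_mem_of_mem _ ha n hn
  obtain ⟨v, hv⟩ := exists_eq_mul_mul_of_mem_leadingCoeffIdeal_jacobson hpow
    fun y hy ↦ hdisj _ hy ⟨y, rfl⟩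
  exact ⟨n, eq_zero_of_mem_leadingCoeffIdeal_jacobson hpow hv⟩

theorem IsSemiprimeRing.jacobson_laurentSeries_eq_bot [IsNoetherian Aᵐᵒᵖ A]
    (hA : IsSemiprimeRing A) : Ideal.jacobson (⊥ : Ideal (LaurentSeries A)) = ⊥ :=
  eq_bot_of_leadingCoeffIdeal_eq_bot <| hA.eq_bot_of_forall_isNilpotent fun _ ↦
    isNilpotent_of_mem_leadingCoeffIdeal_jacobson

end Jacobson

section HahnSeries

variable {Γ A B : Type*} [AddCommMonoid Γ] [PartialOrder Γ] [IsOrderedCancelAddMonoid Γ]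

/-- The ring homomorphism of Hahn series rings applying `f` to every coefficient. -/
def hahnSeriesMap [Semiring A] [Semiring B] (f : A →+* B) : HahnSeries Γ A →+* HahnSeries Γ B where
  toFun g := g.map f
  map_zero' := HahnSeries.ext (funext fun _ ↦ map_zero f)
  map_one' := HahnSeries.map_one f.toMonoidWithZeroHom
  map_add' _ _ := HahnSeries.map_add f.toAddMonoidHom
  map_mul' _ _ := HahnSeries.map_mul f.toNonUnitalRingHom

theorem coeff_hahnSeriesMap [Semiring A] [Semiring B] (f : A →+* B) (g : HahnSeries Γ A) (i : Γ) :
    (hahnSeriesMap f g).coeff i = f (g.coeff i) := rfl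

theorem hahnSeriesMap_surjective [Semiring A] [Semiring B] {f : A →+* B}
    (hf : Function.Surjective f) : Function.Surjective (hahnSeriesMap (Γ := Γ) f) := by
  classical
  intro h
  let s : ZeroHom B A := ⟨Function.update (Function.surjInv hf) 0 0, Function.update_self ..⟩
  have hs (b : B) : f (s b) = b := by
    obtain rfl | hb := eq_or_ne b 0
    · rw [map_zero, map_zero]
    · exact (congrArg f (Function.update_of_ne hb ..)).trans (Function.surjInv_eq hf b)
  exact ⟨h.map s, HahnSeries.ext (funext fun i ↦
    (coeff_hahnSeriesMap f _ i).trans (hs (h.coeff i)))⟩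

theorem coeff_mem_of_mem_jacobson [Ring A] {N : Ideal A} [N.IsTwoSided]
    (hN : Ideal.jacobson (⊥ : Ideal (HahnSeries Γ (A ⧸ N))) = ⊥) {g : HahnSeries Γ A}
    (hg : g ∈ Ideal.jacobson (⊥ : Ideal (HahnSeries Γ A))) (i : Γ) : g.coeff i ∈ N := by
  have : RingHomSurjective (hahnSeriesMap (Γ := Γ) (Ideal.Quotient.mk N)) :=
    ⟨hahnSeriesMap_surjective Ideal.Quotient.mk_surjective⟩
  have hmap : hahnSeriesMap (Ideal.Quotient.mk N) g = 0 := by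
    rw [← Submodule.mem_bot (HahnSeries Γ (A ⧸ N)), ← hN]
    rw [Ideal.jacobson_bot] at hg ⊢
    exact Ring.le_comap_jacobson _ hg
  rw [← Ideal.Quotient.eq_zero_iff_mem, ← coeff_hahnSeriesMap, hmap, HahnSeries.coeff_zero]

theorem coeff_list_prod_mem_pow [Semiring A] (N : Ideal A) [N.IsTwoSided]
    (l : List (HahnSeries Γ A)) (hl : ∀ g ∈ l, ∀ i, g.coeff i ∈ N) (i : Γ) :
    l.prod.coeff i ∈ N ^ l.length := by
  induction l generalizing i with
  | nil => simp only [List.length_nil, Submodule.pow_zero, Ideal.one_eq_top, Submodule.mem_top]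
  | cons g l ih =>
    rw [List.forall_mem_cons] at hl
    rw [List.prod_cons, List.length_cons, Ideal.IsTwoSided.pow_succ]
    exact coeff_mul_mem (N * N ^ l.length).toAddSubmonoid fun j k _ _ ↦
      Ideal.mul_mem_mul (hl.1 j) (ih hl.2 k)

end HahnSeries

theorem exists_forall_list_prod_eq_zero_of_mem_jacobson {A : Type*} [Ring A] [IsNoetherian Aᵐᵒᵖ A] :
    ∃ n, ∀ l : List (LaurentSeries A), n ≤ l.length →
      (∀ f ∈ l, f ∈ Ideal.jacobson (⊥ : Ideal (LaurentSeries A))) → l.prod = 0 := by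
  obtain ⟨N, _, ⟨n, hn⟩, hN⟩ := exists_isNilpotent_isSemiprimeRing_quotient (A := A)
  have := isNoetherian_mulOpposite_of_surjective (Ideal.Quotient.mk N) Ideal.Quotient.mk_surjective
  refine ⟨n, fun l hln hl ↦ HahnSeries.ext (funext fun i ↦ ?_)⟩
  have hmem := coeff_list_prod_mem_pow N l (fun f hf ↦
    coeff_mem_of_mem_jacobson hN.jacobson_laurentSeries_eq_bot (hl f hf)) i
  have hpow := Ideal.pow_le_pow_right hln hmem
  rwa [hn] at hpow

/-- Let `R = A((x))` be the Laurent series ring over `A`. If every cyclic right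
`R`-module is quotient finite-dimensional, then the Jacobson radical `J(R)` of `R` is
nilpotent: there is `n > 0` such that every product of `n` elements of `J(R)`
vanishes, i.e. `J(R) ^ n = 0`. -/
theorem stmt10 (A : Type u) [Ring A]
    (h : ∀ (M : Type u) [AddCommGroup M] [Module (LaurentSeries A)ᵐᵒᵖ M],
      (∃ m : M, Submodule.span (LaurentSeries A)ᵐᵒᵖ {m} = ⊤) →
        IsQFDModule (LaurentSeries A)ᵐᵒᵖ M) :
    ∃ n : ℕ, 0 < n ∧ ∀ f : Fin n → LaurentSeries A,
      (∀ i, f i ∈ Ideal.jacobson (⊥ : Ideal (LaurentSeries A))) →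
        (List.ofFn f).prod = 0 := by
  have hqfd : IsQFDModule (LaurentSeries A)ᵐᵒᵖ (LaurentSeries A) :=
    h (LaurentSeries A) ⟨1, Submodule.eq_top_iff'.2 fun r ↦
      Submodule.mem_span_singleton.2 ⟨MulOpposite.op r, one_mul r⟩⟩
  have := hqfd.isNoetherian_coeff
  obtain ⟨n, hn⟩ := exists_forall_list_prod_eq_zero_of_mem_jacobson (A := A)
  refine ⟨n + 1, n.succ_pos, fun f hf ↦ hn _ ?_ (List.forall_mem_ofFn_iff.2 hf)⟩
  simp only [List.length_ofFn, n.le_succ]
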